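/- If g ≠ 0 and τ ∈ (0, 1/λ_max], then the map α ↦ τ_α is monotonically nondecreasing on (0,2]; in particular τ_α = τ for every α ∈ (0,1], and τ_{α₁} ≤ τ_{α₂} whenever 1 ≤ α₁ ≤ α₂ ≤ 2. -/

import Mathlib

open scoped RealInnerProductSpace

/-- The dogleg path: `p(α) = -τ g` for `α ∈ (0,1]`, and
`p(α) = -τ g + (α-1)(-Q⁻¹ g + τ g)` for `α ∈ (1,2]`. -/
noncomputable def doglegPath {n : ℕ} (τ : ℝ) (g : EuclideanSpace ℝ (Fin n))
    (Qinv : EuclideanSpace ℝ (Fin n) →ₗ[ℝ] EuclideanSpace ℝ (Fin n)) (α : ℝ) :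
    EuclideanSpace ℝ (Fin n) :=
  if α ≤ 1 then (-τ) • g else (-τ) • g + (α - 1) • (-(Qinv g) + τ • g)

/-- The dogleg step size `τ_α = -‖p(α)‖² / ⟨g, p(α)⟩`. -/
noncomputable def doglegTau {n : ℕ} (τ : ℝ) (g : EuclideanSpace ℝ (Fin n))
    (Qinv : EuclideanSpace ℝ (Fin n) →ₗ[ℝ] EuclideanSpace ℝ (Fin n)) (α : ℝ) : ℝ :=
  -‖doglegPath τ g Qinv α‖ ^ 2 / ⟪g, doglegPath τ g Qinv α⟫

/-- `g_α = (⟨g, p(α)⟩ / ‖p(α)‖²) p(α)`. -/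
noncomputable def doglegG {n : ℕ} (τ : ℝ) (g : EuclideanSpace ℝ (Fin n))
    (Qinv : EuclideanSpace ℝ (Fin n) →ₗ[ℝ] EuclideanSpace ℝ (Fin n)) (α : ℝ) :
    EuclideanSpace ℝ (Fin n) :=
  (⟪g, doglegPath τ g Qinv α⟫ / ‖doglegPath τ g Qinv α‖ ^ 2) • doglegPath τ g Qinv α

/-- The (shifted) quadratic model `q(x) = ⟨g, x⟩ + (1/2) xᵀ Q x`. -/
noncomputable def quadModel {n : ℕ}
    (Q : EuclideanSpace ℝ (Fin n) →ₗ[ℝ] EuclideanSpace ℝ (Fin n))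
    (g x : EuclideanSpace ℝ (Fin n)) : ℝ :=
  ⟪g, x⟫ + (1 / 2) * ⟪Q x, x⟫

/-- The surrogate `m_α(x) = ⟨g_α, x⟩ + (1/(2 τ_α)) ‖x‖²`. -/
noncomputable def doglegSurrogate {n : ℕ} (τ : ℝ) (g : EuclideanSpace ℝ (Fin n))
    (Qinv : EuclideanSpace ℝ (Fin n) →ₗ[ℝ] EuclideanSpace ℝ (Fin n)) (α : ℝ)
    (x : EuclideanSpace ℝ (Fin n)) : ℝ :=
  ⟪doglegG τ g Qinv α, x⟫ + (1 / (2 * doglegTau τ g Qinv α)) * ‖x‖ ^ 2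

/-!
Put `d = Q⁻¹ g - τ g` and `s = max (α - 1) 0`, so that the dogleg path is `-(τ g + s d)`. Splitting
`‖τ g + s d‖² = τ ⟪g, τ g + s d⟫ + s ⟪d, τ g + s d⟫` gives
`τ_α = τ + s / (τ ‖g‖² + s ⟪g, d⟫) * (τ ⟪g, d⟫ + s ‖d‖²)`.
When `⟪g, d⟫ ≥ 0`, both factors are nonnegative and nondecreasing in `s ≥ 0`, hence so is `τ_α`.
The sign of `⟪g, d⟫` comes from `⟪Q d, d⟫ ≥ 0` as soon as `τ` is at most the Cauchy step size
`‖g‖² / ⟪Q g, g⟫`, which is at least `1 / λ_max`.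
-/

section Dogleg

open Set

theorem monotoneOn_div_add_mul {a b : ℝ} (ha : 0 < a) (hb : 0 ≤ b) :
    MonotoneOn (fun s : ℝ ↦ s / (a + s * b)) (Ici 0) := by
  intro s (hs : 0 ≤ s) t (ht : 0 ≤ t) hst
  have hsa : s * a ≤ t * a := by gcongr
  refine (div_le_div_iff₀ (by positivity) (by positivity)).2 ?_
  linarith

theorem mul_le_of_le_mul_of_le_one_div {t r L N : ℝ} (hL : 0 < L) (ht : 0 ≤ t) (htL : t ≤ 1 / L)
    (hN : 0 ≤ N) (hr : r ≤ L * N) : t * r ≤ N :=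
  calc t * r ≤ t * (L * N) := by gcongr
    _ = t * L * N := (mul_assoc _ _ _).symm
    _ ≤ N := mul_le_of_le_one_left hN ((le_div_iff₀ hL).1 htL)

/-- The dogleg path in a real vector space, from the gradient step `-τ g` (kept for all
`α ≤ 1`) in the direction of the Newton step `-u`, where `u` plays the role of `Q⁻¹ g`. It is not
cut off at `α = 2`. -/
noncomputable def doglegCurve {V : Type*} [AddCommGroup V] [Module ℝ V]
    (τ : ℝ) (g u : V) (α : ℝ) : V :=
  if α ≤ 1 then (-τ) • g else (-τ) • g + (α - 1) • (-u + τ • g)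

theorem doglegCurve_eq_neg_add_max_smul {V : Type*} [AddCommGroup V] [Module ℝ V]
    (τ : ℝ) (g u : V) (α : ℝ) :
    doglegCurve τ g u α = -(τ • g + max (α - 1) 0 • (u - τ • g)) := by
  unfold doglegCurve
  split_ifs with hα
  · rw [max_eq_right (by linarith)]
    module
  · rw [max_eq_left (by linarith)]
    module

variable {E : Type*} [NormedAddCommGroup E] [InnerProductSpace ℝ E]

/-- The step size `-‖p‖² / ⟪g, p⟫` attached to a step `p` at a point with gradient `g`: the `t` for
which `-t g_p = p`, where `g_p` is the orthogonal projection of `g` onto the line through `p`.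
It is `τ_α` for `p = p(α)`, and has the junk value `0` if `⟪g, p⟫ = 0`. -/
noncomputable def stepSize (g p : E) : ℝ :=
  -‖p‖ ^ 2 / ⟪g, p⟫

theorem stepSize_neg_smul {g : E} (hg : g ≠ 0) (τ : ℝ) : stepSize g (-(τ • g)) = τ := by
  have hg_norm : ‖g‖ ≠ 0 := norm_ne_zero_iff.2 hg
  rw [stepSize, norm_neg, inner_neg_right, neg_div_neg_eq, norm_smul, mul_pow, Real.norm_eq_abs,
    sq_abs, real_inner_smul_right, real_inner_self_eq_norm_sq]
  field_simp

theorem stepSize_neg_add_smul {g d : E} {τ s : ℝ} (h : τ * ‖g‖ ^ 2 + s * ⟪g, d⟫ ≠ 0) :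
    stepSize g (-(τ • g + s • d)) =
      τ + s / (τ * ‖g‖ ^ 2 + s * ⟪g, d⟫) * (τ * ⟪g, d⟫ + s * ‖d‖ ^ 2) := by
  have inner_step : ⟪g, τ • g + s • d⟫ = τ * ‖g‖ ^ 2 + s * ⟪g, d⟫ := by
    rw [inner_add_right, real_inner_smul_right, real_inner_smul_right, real_inner_self_eq_norm_sq]
  have norm_sq_step : ‖τ • g + s • d‖ ^ 2 =
      τ * (τ * ‖g‖ ^ 2 + s * ⟪g, d⟫) + s * (τ * ⟪g, d⟫ + s * ‖d‖ ^ 2) := by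
    rw [norm_add_sq_real, real_inner_smul_left, real_inner_smul_right, norm_smul, norm_smul,
      mul_pow, mul_pow, Real.norm_eq_abs, Real.norm_eq_abs, sq_abs, sq_abs]
    ring
  rw [stepSize, norm_neg, inner_neg_right, neg_div_neg_eq, inner_step, norm_sq_step]
  field_simp

theorem monotoneOn_stepSize_neg_add_smul {g d : E} {τ : ℝ} (hg : g ≠ 0) (hτ : 0 < τ)
    (hgd : 0 ≤ ⟪g, d⟫) : MonotoneOn (fun s : ℝ ↦ stepSize g (-(τ • g + s • d))) (Ici 0) := by
  have hτg : 0 < τ * ‖g‖ ^ 2 := by positivity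
  have denom_pos : ∀ s ∈ Ici (0 : ℝ), 0 < τ * ‖g‖ ^ 2 + s * ⟪g, d⟫ := fun s hs ↦
    add_pos_of_pos_of_nonneg hτg (mul_nonneg hs hgd)
  have affine_mono : MonotoneOn (fun s : ℝ ↦ τ * ⟪g, d⟫ + s * ‖d‖ ^ 2) (Ici 0) :=
    fun s _ t _ hst ↦ by dsimp only; gcongr
  have prod_mono := (monotoneOn_div_add_mul hτg hgd).mul affine_mono
    (fun s hs ↦ div_nonneg hs (denom_pos s hs).le)
    (fun s hs ↦ add_nonneg (mul_nonneg hτ.le hgd) (mul_nonneg hs (sq_nonneg _)))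
  exact (prod_mono.const_add τ).congr fun s hs ↦ (stepSize_neg_add_smul (denom_pos s hs).ne').symm

theorem inner_sub_smul_nonneg_of_isPositive {Q : E →ₗ[ℝ] E} (hQ : Q.IsPositive) {g u : E}
    (hu : Q u = g) {τ : ℝ} (hτ : 0 ≤ τ) (hτ_le : τ * ⟪Q g, g⟫ ≤ ‖g‖ ^ 2) :
    0 ≤ ⟪g, u - τ • g⟫ := by
  have hQgu : ⟪Q g, u⟫ = ‖g‖ ^ 2 := by
    rw [hQ.isSymmetric g u, hu, real_inner_self_eq_norm_sq]
  have expand : ⟪Q (u - τ • g), u - τ • g⟫ =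
      ⟪g, u - τ • g⟫ - τ * (‖g‖ ^ 2 - τ * ⟪Q g, g⟫) := by
    rw [map_sub, map_smul, hu, inner_sub_left, real_inner_smul_left, inner_sub_right (Q g), hQgu,
      real_inner_smul_right]
  have quad_nonneg : 0 ≤ ⟪Q (u - τ • g), u - τ • g⟫ := hQ.inner_nonneg_left _
  have gap_nonneg : 0 ≤ τ * (‖g‖ ^ 2 - τ * ⟪Q g, g⟫) := mul_nonneg hτ (sub_nonneg.2 hτ_le)
  linarith

theorem doglegTau_monotone_general {Q : E →ₗ[ℝ] E} (hQ : Q.IsPositive) {g u : E} (hg : g ≠ 0)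
    (hu : Q u = g) {τ : ℝ} (hτ : 0 < τ) (hτ_le : τ * ⟪Q g, g⟫ ≤ ‖g‖ ^ 2) :
    Monotone (fun α ↦ stepSize g (doglegCurve τ g u α)) ∧
      ∀ α ≤ 1, stepSize g (doglegCurve τ g u α) = τ := by
  constructor
  · intro α₁ α₂ hα
    simp only [doglegCurve_eq_neg_add_max_smul]
    have hgd := inner_sub_smul_nonneg_of_isPositive hQ hu hτ.le hτ_le
    exact monotoneOn_stepSize_neg_add_smul hg hτ hgd (mem_Ici.2 (le_max_right _ _))
      (mem_Ici.2 (le_max_right _ _)) (by gcongr)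
  · intro α hα
    rw [doglegCurve, if_pos hα, neg_smul, stepSize_neg_smul hg]

end Dogleg

/-- If `g ≠ 0` and `τ ∈ (0, 1/λ_max]`, then `α ↦ τ_α` is monotonically
nondecreasing on `(0,2]`; in particular `τ_α = τ` for every `α ∈ (0,1]`, and
`τ_{α₁} ≤ τ_{α₂}` whenever `1 ≤ α₁ ≤ α₂ ≤ 2`. -/
theorem doglegTau_monotone {n : ℕ}
    (Q Qinv : EuclideanSpace ℝ (Fin n) →ₗ[ℝ] EuclideanSpace ℝ (Fin n))
    (hQsymm : ∀ x y : EuclideanSpace ℝ (Fin n), ⟪Q x, y⟫ = ⟪x, Q y⟫)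
    (hQpd : ∀ x : EuclideanSpace ℝ (Fin n), x ≠ 0 → 0 < ⟪Q x, x⟫)
    (hinv₁ : ∀ x, Q (Qinv x) = x) (hinv₂ : ∀ x, Qinv (Q x) = x)
    (lamMax lamMin : ℝ) (hlamMaxPos : 0 < lamMax) (hlamMinPos : 0 < lamMin)
    (hRayleighMax : ∀ x : EuclideanSpace ℝ (Fin n), ⟪Q x, x⟫ ≤ lamMax * ‖x‖ ^ 2)
    (hRayleighMin : ∀ x : EuclideanSpace ℝ (Fin n), lamMin * ‖x‖ ^ 2 ≤ ⟪Q x, x⟫)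
    (g : EuclideanSpace ℝ (Fin n)) (hg : g ≠ 0) (τ : ℝ)
    (hτpos : 0 < τ) (hτle : τ ≤ 1 / lamMax) :
    (∀ α₁ α₂ : ℝ, 0 < α₁ → α₁ ≤ α₂ → α₂ ≤ 2 →
      doglegTau τ g Qinv α₁ ≤ doglegTau τ g Qinv α₂) ∧
    (∀ α : ℝ, 0 < α → α ≤ 1 → doglegTau τ g Qinv α = τ) ∧
    (∀ α₁ α₂ : ℝ, 1 ≤ α₁ → α₁ ≤ α₂ → α₂ ≤ 2 →
      doglegTau τ g Qinv α₁ ≤ doglegTau τ g Qinv α₂) := by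
  have hQ : Q.IsPositive :=
    ⟨hQsymm, fun x ↦ (mul_nonneg hlamMinPos.le (sq_nonneg _)).trans (hRayleighMin x)⟩
  obtain ⟨mono, eq_of_le_one⟩ := doglegTau_monotone_general hQ hg (hinv₁ g) hτpos
    (mul_le_of_le_mul_of_le_one_div hlamMaxPos hτpos.le hτle (sq_nonneg _) (hRayleighMax g))
  -- `doglegTau τ g Qinv α` is by definition `stepSize g (doglegCurve τ g (Qinv g) α)`.
  exact ⟨fun _ _ _ h _ ↦ mono h, fun α _ h ↦ eq_of_le_one α h, fun _ _ _ h _ ↦ mono h⟩
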